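/- For a finite connected graph G, the minimal number of forests partitioning the edge set of G equals the minimal number of subtrees (connected acyclic subgraphs) whose edge sets cover the edge set of G. -/

import Mathlib

/-!
In a connected graph every forest extends to a spanning tree, so a family of forests partitioning
the edges extends to a family of subtrees covering them. Conversely, given a family of subtrees
covering the edges, choose for each edge one tree containing it: the edges assigned to a given tree
form a forest, and these forests partition the edges. Neither passage changes the index set.
-/

section

open SimpleGraph

variable {V ι : Type*} {G : SimpleGraph V}

theorem isAcyclic_induce_iff_of_support_subset {s : Set V} (hs : G.support ⊆ s) :
    (G.induce s).IsAcyclic ↔ G.IsAcyclic := by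
  refine ⟨fun h v c hc ↦ ?_, fun h ↦ h.induce s⟩
  have hcs : ∀ x ∈ c.support, x ∈ s :=
    fun x hx ↦ hs (mem_support_of_mem_walk_support c hc.not_nil hx)
  have hmap : (c.induce s hcs).map (Embedding.induce s).toHom = c := c.map_induce hcs
  exact h (c.induce s hcs) (.of_map (hmap.symm ▸ hc))

theorem isAcyclic_coe_iff_isAcyclic_spanningCoe (H : G.Subgraph) :
    H.coe.IsAcyclic ↔ H.spanningCoe.IsAcyclic :=
  isAcyclic_induce_iff_of_support_subset (G := H.spanningCoe) (s := H.verts)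
    fun _ ⟨_, hvw⟩ ↦ H.edge_vert hvw

theorem exists_isSpanning_isTree_of_isAcyclic {F : SimpleGraph V} (hG : G.Connected)
    (hFG : F ≤ G) (hF : F.IsAcyclic) :
    ∃ T : G.Subgraph, T.IsSpanning ∧ T.coe.IsTree ∧ F ≤ T.spanningCoe := by
  obtain ⟨S, hFS, hSG, hS⟩ := hG.exists_isTree_le_of_le_of_isAcyclic hFG hF
  have hspan : (toSubgraph S hSG).IsSpanning := toSubgraph.isSpanning S hSG
  exact ⟨toSubgraph S hSG, hspan,
    (Subgraph.spanningCoeEquivCoeOfSpanning _ hspan).isTree_iff.1 hS, hFS⟩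

theorem mem_edgeSet_labelGraph (C : G.EdgeLabeling ι) (i : ι) (e : Sym2 V) :
    e ∈ (C.labelGraph i).edgeSet ↔ ∃ he : e ∈ G.edgeSet, C ⟨e, he⟩ = i := by
  induction e with | _ v w => exact EdgeLabeling.labelGraph_adj v w

theorem existsUnique_mem_edgeSet_labelGraph (C : G.EdgeLabeling ι) {e : Sym2 V}
    (he : e ∈ G.edgeSet) : ∃! i, e ∈ (C.labelGraph i).edgeSet := by
  simp only [mem_edgeSet_labelGraph, he, exists_true_left, existsUnique_eq']

theorem exists_edgeLabeling_labelGraph_le {H : ι → SimpleGraph V}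
    (hH : ∀ e ∈ G.edgeSet, ∃ i, e ∈ (H i).edgeSet) :
    ∃ C : G.EdgeLabeling ι, ∀ i, C.labelGraph i ≤ H i := by
  choose f hf using hH
  refine ⟨fun e ↦ f e e.2, fun i ↦ edgeSet_subset_edgeSet.1 fun e he ↦ ?_⟩
  obtain ⟨heG, rfl⟩ := (mem_edgeSet_labelGraph _ i e).1 he
  exact hf e heG

theorem forest_partition_eq_tree_cover_general (hG : G.Connected) :
    (∃ F : ι → SimpleGraph V, (∀ i, F i ≤ G ∧ (F i).IsAcyclic) ∧
        ∀ e ∈ G.edgeSet, ∃! i, e ∈ (F i).edgeSet) ↔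
      ∃ T : ι → G.Subgraph, (∀ i, (T i).coe.Connected ∧ (T i).coe.IsAcyclic) ∧
        ∀ e ∈ G.edgeSet, ∃ i, e ∈ (T i).edgeSet := by
  simp only [← Subgraph.edgeSet_spanningCoe]
  constructor
  · rintro ⟨F, hF, hpart⟩
    choose T _ hT hFT using fun i ↦ exists_isSpanning_isTree_of_isAcyclic hG (hF i).1 (hF i).2
    exact ⟨T, fun i ↦ ⟨(hT i).connected, (hT i).isAcyclic⟩,
      fun e he ↦ (hpart e he).exists.imp fun i hi ↦ edgeSet_mono (hFT i) hi⟩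
  · rintro ⟨T, hT, hcover⟩
    obtain ⟨C, hCT⟩ := exists_edgeLabeling_labelGraph_le hcover
    have hacyclic (i : ι) : (T i).spanningCoe.IsAcyclic :=
      (isAcyclic_coe_iff_isAcyclic_spanningCoe (T i)).1 (hT i).2
    exact ⟨C.labelGraph, fun i ↦ ⟨C.labelGraph_le, (hacyclic i).anti (hCT i)⟩,
      fun e he ↦ existsUnique_mem_edgeSet_labelGraph C he⟩

end

/-- For a finite connected graph `G` (with at least one edge), the
minimal number of forests partitioning the edge set of `G` equals the minimal
number of subtrees (connected acyclic subgraphs) whose edge sets cover the edge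
set of `G`. -/
theorem forest_partition_eq_tree_cover {V : Type*} [Fintype V]
    (G : SimpleGraph V) (hconn : G.Connected) (hne : G.edgeSet.Nonempty) :
    sInf {k | ∃ F : Fin k → SimpleGraph V,
        (∀ i, F i ≤ G ∧ (F i).IsAcyclic) ∧
        ∀ e ∈ G.edgeSet, ∃! i, e ∈ (F i).edgeSet} =
    sInf {k | ∃ T : Fin k → G.Subgraph,
        (∀ i, (T i).coe.Connected ∧ (T i).coe.IsAcyclic) ∧
        ∀ e ∈ G.edgeSet, ∃ i, e ∈ (T i).edgeSet} :=
  congrArg sInf (Set.ext fun _ ↦ forest_partition_eq_tree_cover_general hconn)
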